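/- arXiv:1511.06330 — 5 statements merged into one kernel-verified Lean document; each statement's English description precedes it below -/
import Mathlib

section
/- Let F be a field of characteristic different from 2 and let n ≥ 1. A symmetric matrix U ∈ M_n(F) is positive semidefinite at every field ordering of F if and only if there exist finitely many matrices A_1, ..., A_N ∈ M_n(F) such that U = A_1ᵀA_1 + ... + A_NᵀA_N (i.e., U is a sum of hermitian squares in the matrix algebra M_n(F) with the transpose involution). -/
open Matrix BigOperators

/-- A field ordering of `F`, given by its cone of nonnegative elements.
This is equivalent to a linear order making `F` a linearly ordered field. -/
structure FieldOrdering (F : Type*) [Field F] where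
  nonneg : F → Prop
  add_nonneg : ∀ {x y : F}, nonneg x → nonneg y → nonneg (x + y)
  mul_nonneg : ∀ {x y : F}, nonneg x → nonneg y → nonneg (x * y)
  total : ∀ x : F, nonneg x ∨ nonneg (-x)
  eq_zero_of : ∀ {x : F}, nonneg x → nonneg (-x) → x = 0

/-- `x >_P 0`. -/
def FieldOrdering.pos {F : Type*} [Field F] (P : FieldOrdering F) (x : F) : Prop :=
  P.nonneg x ∧ x ≠ 0

/-- A matrix is positive semidefinite at an ordering `P` if `xᵀMx ≥_P 0` for all `x`. -/
def Matrix.IsPSDAt {F : Type*} [Field F] {n : ℕ} (P : FieldOrdering F)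
    (M : Matrix (Fin n) (Fin n) F) : Prop :=
  ∀ x : Fin n → F, P.nonneg (x ⬝ᵥ (M *ᵥ x))

/-- A matrix is positive definite at an ordering `P` if `xᵀMx >_P 0` for all `x ≠ 0`. -/
def Matrix.IsPDAt {F : Type*} [Field F] {n : ℕ} (P : FieldOrdering F)
    (M : Matrix (Fin n) (Fin n) F) : Prop :=
  ∀ x : Fin n → F, x ≠ 0 → P.pos (x ⬝ᵥ (M *ᵥ x))

/-!
A symmetric `U` is congruent to a diagonal matrix, whose entries are values of the quadratic form
`x ↦ xᵀUx`. A diagonal matrix whose entries are sums of squares is a sum of hermitian squares, and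
congruence preserves such sums; so `U` is a sum of hermitian squares as soon as all the values
`xᵀUx` are sums of squares. By Artin's theorem this means exactly that all these values are
nonnegative at every ordering. Artin's theorem in turn holds because an element `a` outside a
preordering `P` is excluded by some ordering containing `P`: adjoin `-a` to `P`, and extend the
result to a maximal preordering, which is an ordering.
-/

section Orderings

theorem exists_le_isMax_ringPreordering {R : Type*} [CommRing R] (P : RingPreordering R) :
    ∃ Q : RingPreordering R, P ≤ Q ∧ IsMax Q := by
  refine zorn_le_nonempty_Ici₀ P (fun c _ hc Q hQ => ?_) P le_rfl
  have mem_sSup_iff {x : R} :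
      x ∈ sSup (RingPreordering.toSubsemiring '' c) ↔ ∃ S ∈ c, x ∈ S := by
    rw [Subsemiring.mem_sSup_of_directedOn ⟨_, Set.mem_image_of_mem _ hQ⟩
      (RingPreordering.toSubsemiring_mono.isChain_image hc).directedOn]
    simp only [Set.exists_mem_image, RingPreordering.mem_toSubsemiring]
  refine ⟨{ sSup (RingPreordering.toSubsemiring '' c) with
    mem_of_isSquare' := fun hx => mem_sSup_iff.mpr ⟨Q, hQ, Q.mem_of_isSquare hx⟩
    neg_one_notMem' := fun h => ?_ }, fun S hS x hx => mem_sSup_iff.mpr ⟨S, hS, hx⟩⟩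
  obtain ⟨S, -, hS⟩ := mem_sSup_iff.mp h
  exact S.neg_one_notMem hS

variable {F : Type*} [Field F]

-- The extension is `P - aP`: if `-1 = s - a * t` with `s, t ∈ P`, then `a = (1 + s) / t ∈ P`.
theorem exists_ringPreordering_ge_neg_mem {P : RingPreordering F} {a : F} (ha : a ∉ P) :
    ∃ Q : RingPreordering F, P ≤ Q ∧ -a ∈ Q := by
  refine ⟨.mk' {x | ∃ s ∈ P, ∃ t ∈ P, x = s - a * t} ?_ ?_ ?_ ?_,
    fun s hs => ⟨s, hs, 0, zero_mem P, by ring⟩, 0, zero_mem P, 1, one_mem P, by ring⟩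
  · rintro _ _ ⟨s, hs, t, ht, rfl⟩ ⟨s', hs', t', ht', rfl⟩
    exact ⟨s + s', add_mem hs hs', t + t', add_mem ht ht', by ring⟩
  · rintro _ _ ⟨s, hs, t, ht, rfl⟩ ⟨s', hs', t', ht', rfl⟩
    exact ⟨s * s' + a * a * (t * t'),
      add_mem (mul_mem hs hs') (mul_mem (P.mul_self_mem a) (mul_mem ht ht')),
      s * t' + t * s', add_mem (mul_mem hs ht') (mul_mem ht hs'), by ring⟩
  · exact fun x => ⟨x * x, P.mul_self_mem x, 0, zero_mem P, by ring⟩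
  · rintro ⟨s, hs, t, ht, h⟩
    have ht0 : t ≠ 0 := by
      rintro rfl
      exact P.neg_one_notMem (by simpa [h] using hs)
    have ha_eq : a = (1 + s) * t⁻¹ := by
      field_simp
      linear_combination h
    exact ha (ha_eq ▸ mul_mem (add_mem (one_mem P) hs) (RingPreordering.inv_mem ht))

theorem hasMemOrNegMem_of_isMax {P : RingPreordering F} (hP : IsMax P) : HasMemOrNegMem P where
  mem_or_neg_mem a := by
    by_contra! h
    obtain ⟨Q, hPQ, ha⟩ := exists_ringPreordering_ge_neg_mem h.1
    exact h.2 (hP hPQ ha)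

namespace FieldOrdering

/-- The field ordering whose nonnegative cone is a preordering `P` with `P ∪ -P = F`. -/
def ofRingPreordering (P : RingPreordering F) [HasMemOrNegMem P] : FieldOrdering F where
  nonneg x := x ∈ P
  add_nonneg := add_mem
  mul_nonneg := mul_mem
  total := mem_or_neg_mem P
  eq_zero_of := RingPreordering.eq_zero_of_mem_of_neg_mem

theorem nonneg_mul_self (O : FieldOrdering F) (x : F) : O.nonneg (x * x) := by
  rcases O.total x with h | h
  · exact O.mul_nonneg h h
  · simpa only [neg_mul_neg] using O.mul_nonneg h h

theorem nonneg_of_isSumSq (O : FieldOrdering F) {x : F} (hx : IsSumSq x) : O.nonneg x := by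
  induction hx with
  | zero => simpa only [mul_zero] using O.nonneg_mul_self 0
  | sq_add x _ ih => exact O.add_nonneg (O.nonneg_mul_self x) ih

end FieldOrdering

theorem mem_ringPreordering_iff_forall_fieldOrdering {P : RingPreordering F} {a : F} :
    a ∈ P ↔ ∀ O : FieldOrdering F, (∀ x ∈ P, O.nonneg x) → O.nonneg a := by
  refine ⟨fun ha O hO => hO a ha, fun h => ?_⟩
  by_contra ha
  obtain ⟨Q, hPQ, hneg⟩ := exists_ringPreordering_ge_neg_mem ha
  obtain ⟨M, hQM, hM⟩ := exists_le_isMax_ringPreordering Q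
  have := hasMemOrNegMem_of_isMax hM
  have ha_mem : a ∈ M := h (.ofRingPreordering M) fun x hx => hQM (hPQ hx)
  have ha_zero : a = 0 := RingPreordering.eq_zero_of_mem_of_neg_mem ha_mem (hQM hneg)
  exact ha (ha_zero ▸ zero_mem P)

theorem isSumSq_of_isSumSq_neg_one {R : Type*} [CommRing R] [Invertible (2 : R)]
    (h : IsSumSq (-1 : R)) (a : R) : IsSumSq a := by
  have ha : a = ⅟2 * (a + 1) * (⅟2 * (a + 1)) + -1 * (⅟2 * (a - 1) * (⅟2 * (a - 1))) := by
    linear_combination (-a * (2 * ⅟2 + 1)) * invOf_mul_self (2 : R)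
  rw [ha]
  exact (IsSumSq.mul_self _).add (h.mul (IsSumSq.mul_self _))

theorem isSumSq_iff_forall_fieldOrdering_nonneg [Invertible (2 : F)] {a : F} :
    IsSumSq a ↔ ∀ O : FieldOrdering F, O.nonneg a := by
  refine ⟨fun ha O => O.nonneg_of_isSumSq ha, fun h => ?_⟩
  by_cases hneg : IsSumSq (-1 : F)
  · exact isSumSq_of_isSumSq_neg_one hneg a
  · let P : RingPreordering F :=
      .mk' {x | IsSumSq x} IsSumSq.add IsSumSq.mul IsSumSq.mul_self hneg
    have ha : a ∈ P := mem_ringPreordering_iff_forall_fieldOrdering.mpr fun O _ => h O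
    exact ha

end Orderings

section SumsOfHermitianSquares

theorem mem_closure_range_iff_exists_fin_sum {M ι : Type*} [AddCommMonoid M] {f : ι → M} {x : M} :
    x ∈ AddSubmonoid.closure (Set.range f) ↔ ∃ (N : ℕ) (a : Fin N → ι), x = ∑ i, f (a i) := by
  refine ⟨fun hx => ?_, ?_⟩
  · induction hx using AddSubmonoid.closure_induction with
    | mem _ h =>
      obtain ⟨i, rfl⟩ := h
      exact ⟨1, fun _ => i, by simp⟩
    | zero => exact ⟨0, Fin.elim0, by simp⟩
    | add _ _ _ _ hx hy =>
      obtain ⟨N, a, rfl⟩ := hx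
      obtain ⟨K, b, rfl⟩ := hy
      exact ⟨N + K, Fin.append a b, by simp [Fin.sum_univ_add]⟩
  · rintro ⟨N, a, rfl⟩
    exact sum_mem fun i _ => AddSubmonoid.subset_closure (Set.mem_range_self (a i))

variable {m R : Type*} [Fintype m]

theorem dotProduct_transpose_mul_mul_mulVec {k : Type*} [Fintype k] [CommSemiring R]
    (C : Matrix m k R) (U : Matrix m m R) (x : k → R) :
    x ⬝ᵥ (Cᵀ * U * C) *ᵥ x = (C *ᵥ x) ⬝ᵥ U *ᵥ (C *ᵥ x) := by
  rw [Matrix.mul_assoc, ← mulVec_mulVec, ← mulVec_mulVec, dotProduct_transpose_mulVec,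
    dotProduct_comm]

/-- The sums of hermitian squares in the algebra of square matrices with the transpose
involution, as an additive submonoid. -/
def sumTransposeMulSelf (m R : Type*) [Fintype m] [CommSemiring R] :
    AddSubmonoid (Matrix m m R) :=
  AddSubmonoid.closure (Set.range fun A => Aᵀ * A)

theorem transpose_mul_self_mem_sumTransposeMulSelf [CommSemiring R] (A : Matrix m m R) :
    Aᵀ * A ∈ sumTransposeMulSelf m R :=
  AddSubmonoid.subset_closure ⟨A, rfl⟩

theorem transpose_mul_mul_mem_sumTransposeMulSelf [CommSemiring R] {U : Matrix m m R}
    (hU : U ∈ sumTransposeMulSelf m R) (C : Matrix m m R) :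
    Cᵀ * U * C ∈ sumTransposeMulSelf m R := by
  induction hU using AddSubmonoid.closure_induction with
  | mem _ h =>
    obtain ⟨A, rfl⟩ := h
    simpa only [transpose_mul, Matrix.mul_assoc] using
      transpose_mul_self_mem_sumTransposeMulSelf (A * C)
  | zero => simp
  | add _ _ _ _ hU hV => simpa only [Matrix.mul_add, Matrix.add_mul] using add_mem hU hV

theorem isSumSq_dotProduct_mulVec_of_mem_sumTransposeMulSelf [CommSemiring R] {U : Matrix m m R}
    (hU : U ∈ sumTransposeMulSelf m R) (x : m → R) : IsSumSq (x ⬝ᵥ U *ᵥ x) := by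
  induction hU using AddSubmonoid.closure_induction with
  | mem _ h =>
    obtain ⟨A, rfl⟩ := h
    classical
    have hA : x ⬝ᵥ (Aᵀ * A) *ᵥ x = (A *ᵥ x) ⬝ᵥ (A *ᵥ x) := by
      simpa using dotProduct_transpose_mul_mul_mulVec A 1 x
    exact hA ▸ IsSumSq.sum_mul_self _ _
  | zero => simp
  | add _ _ _ _ hU hV => simpa only [add_mulVec, dotProduct_add] using hU.add hV

theorem diagonal_single_mem_sumTransposeMulSelf [DecidableEq m] [CommSemiring R] (i : m) {a : R}
    (ha : IsSumSq a) : diagonal (Pi.single i a) ∈ sumTransposeMulSelf m R := by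
  induction ha with
  | zero => simp
  | sq_add c _ ih =>
    have hc : diagonal (Pi.single i (c * c)) ∈ sumTransposeMulSelf m R := by
      simpa only [diagonal_transpose, diagonal_mul_diagonal', Pi.single_mul, Pi.mul_def] using
        transpose_mul_self_mem_sumTransposeMulSelf (diagonal (Pi.single i c))
    rw [Pi.single_add, Pi.add_def, ← diagonal_add]
    exact add_mem hc ih

theorem diagonal_mem_sumTransposeMulSelf [DecidableEq m] [CommSemiring R] {d : m → R}
    (hd : ∀ i, IsSumSq (d i)) : diagonal d ∈ sumTransposeMulSelf m R := by
  have hsum : diagonal d = ∑ i, diagonal (Pi.single i (d i)) := by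
    conv_lhs => rw [← Finset.univ_sum_single d]
    exact map_sum (diagonalAddMonoidHom m R) _ _
  exact hsum ▸ sum_mem fun i _ => diagonal_single_mem_sumTransposeMulSelf i (hd i)

variable {F : Type*} [Field F] [Invertible (2 : F)] {U : Matrix m m F}

theorem exists_isUnit_isDiag_transpose_mul_mul [DecidableEq m] (hU : U.IsSymm) :
    ∃ C : Matrix m m F, IsUnit C ∧ (Cᵀ * U * C).IsDiag := by
  obtain ⟨v, hv⟩ := LinearMap.BilinForm.exists_orthogonal_basis
    (LinearMap.BilinForm.isSymm_iff.mp (isSymm_toBilin'_iff_isSymm.mpr hU))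
  let w : Module.Basis m F (m → F) := v.reindex (Fintype.equivOfCardEq (by simp))
  have hw : (toBilin' U).IsOrthoᵢ w := fun i j hij => by
    simpa [w, Function.onFun] using hv (Equiv.injective _ |>.ne hij)
  let C : Matrix m m F := (Pi.basisFun F m).toMatrix w
  have hC_mul : Cᵀ * U * C = LinearMap.BilinForm.toMatrix w (toBilin' U) := by
    rw [← LinearMap.BilinForm.toMatrix_mul_basis_toMatrix (Pi.basisFun F m),
      LinearMap.BilinForm.toMatrix_basisFun, LinearMap.BilinForm.toMatrix'_toBilin']
  have := (Pi.basisFun F m).invertibleToMatrix w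
  refine ⟨C, isUnit_of_invertible C, ?_⟩
  rw [hC_mul]
  exact fun i j hij => (LinearMap.BilinForm.toMatrix_apply w _ i j).trans (hw hij)

theorem mem_sumTransposeMulSelf_iff_forall_isSumSq (hU : U.IsSymm) :
    U ∈ sumTransposeMulSelf m F ↔ ∀ x : m → F, IsSumSq (x ⬝ᵥ U *ᵥ x) := by
  classical
  refine ⟨isSumSq_dotProduct_mulVec_of_mem_sumTransposeMulSelf, fun h => ?_⟩
  obtain ⟨C, hC, hdiag⟩ := exists_isUnit_isDiag_transpose_mul_mul hU
  have hC_det := (isUnit_iff_isUnit_det C).mp hC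
  have hdiag_mem : Cᵀ * U * C ∈ sumTransposeMulSelf m F := by
    rw [← hdiag.diagonal_diag]
    refine diagonal_mem_sumTransposeMulSelf fun i => ?_
    have hdiag_apply : (Cᵀ * U * C).diag i =
        (C *ᵥ Pi.single i 1) ⬝ᵥ U *ᵥ (C *ᵥ Pi.single i 1) := by
      rw [← dotProduct_transpose_mul_mul_mulVec, mulVec_single_one, single_one_dotProduct]
      rfl
    exact hdiag_apply ▸ h _
  have hU_eq : U = (C⁻¹)ᵀ * (Cᵀ * U * C) * C⁻¹ := by
    have hC_mul : C * C⁻¹ = 1 := C.mul_nonsing_inv hC_det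
    calc U = (C * C⁻¹)ᵀ * U * (C * C⁻¹) := by simp [hC_mul]
      _ = (C⁻¹)ᵀ * (Cᵀ * U * C) * C⁻¹ := by simp only [transpose_mul, Matrix.mul_assoc]
  exact hU_eq ▸ transpose_mul_mul_mem_sumTransposeMulSelf hdiag_mem C⁻¹

end SumsOfHermitianSquares

/-- A symmetric matrix over a field of characteristic ≠ 2 is positive semidefinite at
every field ordering iff it is a finite sum of hermitian squares `Aᵀ * A`. -/
theorem stmt_0 {F : Type*} [Field F] (hF : (2 : F) ≠ 0) {n : ℕ} (hn : 1 ≤ n)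
    (U : Matrix (Fin n) (Fin n) F) (hU : Uᵀ = U) :
    (∀ P : FieldOrdering F, U.IsPSDAt P) ↔
      ∃ (N : ℕ) (A : Fin N → Matrix (Fin n) (Fin n) F),
        U = ∑ i, (A i)ᵀ * A i := by
  have : Invertible (2 : F) := invertibleOfNonzero hF
  calc (∀ P : FieldOrdering F, U.IsPSDAt P)
      ↔ ∀ (x : Fin n → F) (P : FieldOrdering F), P.nonneg (x ⬝ᵥ U *ᵥ x) := forall_comm
    _ ↔ ∀ x : Fin n → F, IsSumSq (x ⬝ᵥ U *ᵥ x) :=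
        forall_congr' fun _ => isSumSq_iff_forall_fieldOrdering_nonneg.symm
    _ ↔ U ∈ sumTransposeMulSelf (Fin n) F := (mem_sumTransposeMulSelf_iff_forall_isSumSq hU).symm
    _ ↔ ∃ (N : ℕ) (A : Fin N → Matrix (Fin n) (Fin n) F), U = ∑ i, (A i)ᵀ * A i :=
        mem_closure_range_iff_exists_fin_sum
end

section
/- Let F be a field of characteristic different from 2, let Φ ∈ M_n(F) be symmetric and invertible, and let σ be the involution on M_n(F) given by σ(X) = ΦXᵀΦ⁻¹. Let b_1, ..., b_t ∈ F be nonzero and let Y be the set of field orderings P of F with b_1 >_P 0, ..., b_t >_P 0. Let a ∈ M_n(F) be invertible with σ(a) = a and such that Φ⁻¹a is positive definite at every P ∈ Y. Then for every (not necessarily invertible) u ∈ M_n(F) with σ(u) = u, the following are equivalent: (i) Φ⁻¹u is positive semidefinite at every P ∈ Y; (ii) there exists for each e ∈ {0,1}^t a finite list of matrices X_{e,1}, ..., X_{e,N} ∈ M_n(F) such that u = Σ_{e ∈ {0,1}^t} b_1^{e_1}···b_t^{e_t} · Σ_{i=1}^{N} σ(X_{e,i}) a X_{e,i}. -/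
open Matrix BigOperators

/-!
Replacing `w` by `Φ⁻¹w` turns `σ`-symmetric matrices into symmetric ones and `σ(X)aX` into
`Xᵀ(Φ⁻¹a)X`, so only the symmetric matrices `A = Φ⁻¹a` and `S = Φ⁻¹u` matter. Let `T` be the
semiring generated by the squares of `F` and the `bⱼ`. By Artin's theorem (an element outside a
preordering of a field is negative at some ordering above that preordering) `T` consists of the
elements that are nonnegative on `Y`; if `-1 ∈ T`, then `Y` is empty and `T = F`, as every element
is a difference of two squares. Diagonalizing `S` gives `S = ∑ dᵢ zᵢzᵢᵀ` where each `dᵢ` is a value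
of the form `xᵀSx`, hence `dᵢ ∈ T` if `S` is positive semidefinite on `Y`. As soon as `A` takes a
nonzero value `c = xᵀAx`, which lies in `T`, the matrix `X = xzᵀ` satisfies `c⁻¹XᵀAX = zzᵀ`. So `S`
is a `T`-linear combination of matrices `XᵀAX`. Finally, every element of `T` is a sum of terms
`b^e c²`, and `b^e c² XᵀAX = b^e (cX)ᵀA(cX)`.
-/

section Artin

variable {R F : Type*} [CommRing R] [Field F]

theorem exists_ge_isMax_ringPreordering (P : RingPreordering R) : ∃ O ≥ P, IsMax O := by
  refine zorn_le_nonempty_Ici₀ P (fun c _ hchain Q hQ => ?_) P le_rfl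
  have hmem {x : R} : x ∈ sSup (RingPreordering.toSubsemiring '' c) ↔ ∃ O ∈ c, x ∈ O := by
    have hdir : DirectedOn (· ≤ ·) (RingPreordering.toSubsemiring '' c) :=
      directedOn_image.mpr hchain.directedOn
    rw [Subsemiring.mem_sSup_of_directedOn ⟨_, Set.mem_image_of_mem _ hQ⟩ hdir,
      Set.exists_mem_image]
    rfl
  exact ⟨{ toSubsemiring := sSup (RingPreordering.toSubsemiring '' c)
           mem_of_isSquare' := fun hx => hmem.mpr ⟨Q, hQ, Q.mem_of_isSquare hx⟩
           neg_one_notMem' := fun h =>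
             let ⟨O, _, hO⟩ := hmem.mp h
             O.neg_one_notMem hO },
    fun O hO _ hx => hmem.mpr ⟨O, hO, hx⟩⟩

theorem exists_ge_mem_ringPreordering_of_neg_notMem (P : RingPreordering F) {x : F}
    (hx : -x ∉ P) : ∃ Q ≥ P, x ∈ Q := by
  refine ⟨RingPreordering.mk' {y | ∃ p ∈ P, ∃ q ∈ P, y = p + x * q} ?add ?mul ?sq ?neg_one,
    fun p hp => ⟨p, hp, 0, zero_mem P, by ring⟩, ⟨0, zero_mem P, 1, one_mem P, by ring⟩⟩
  case add =>
    rintro _ _ ⟨p, hp, q, hq, rfl⟩ ⟨r, hr, s, hs, rfl⟩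
    exact ⟨p + r, add_mem hp hr, q + s, add_mem hq hs, by ring⟩
  case mul =>
    rintro _ _ ⟨p, hp, q, hq, rfl⟩ ⟨r, hr, s, hs, rfl⟩
    exact ⟨p * r + x * x * (q * s), add_mem (mul_mem hp hr) (mul_mem (P.mul_self_mem x)
      (mul_mem hq hs)), p * s + q * r, add_mem (mul_mem hp hs) (mul_mem hq hr), by ring⟩
  case sq => exact fun y => ⟨y * y, P.mul_self_mem y, 0, zero_mem P, by ring⟩
  case neg_one =>
    rintro ⟨p, hp, q, hq, hpq⟩
    rcases eq_or_ne q 0 with rfl | hq0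
    · exact P.neg_one_notMem (by simpa [hpq] using hp)
    · have hx_eq : -x = (1 + p) * q⁻¹ := by
        field_simp
        linear_combination hpq
      exact hx (hx_eq ▸ mul_mem (add_mem (one_mem P) hp) (RingPreordering.inv_mem hq))

theorem mem_or_neg_mem_of_isMax_ringPreordering {O : RingPreordering F} (hO : IsMax O) (x : F) :
    x ∈ O ∨ -x ∈ O := by
  by_contra! hx
  obtain ⟨Q, hOQ, hxQ⟩ := exists_ge_mem_ringPreordering_of_neg_notMem O hx.2
  exact hx.1 (hO hOQ hxQ)

namespace FieldOrdering

/-- The set of nonnegative elements of a field ordering, as a preordering in the sense of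
Mathlib. -/
def nonnegCone (P : FieldOrdering F) : RingPreordering F :=
  have mul_self_nonneg (x : F) : P.nonneg (x * x) := by
    rcases P.total x with h | h
    · exact P.mul_nonneg h h
    · simpa using P.mul_nonneg h h
  RingPreordering.mk' {x | P.nonneg x} P.add_nonneg P.mul_nonneg mul_self_nonneg fun h =>
    one_ne_zero (P.eq_zero_of (by simpa using mul_self_nonneg 1) h)

theorem mem_nonnegCone {P : FieldOrdering F} {x : F} : x ∈ P.nonnegCone ↔ P.nonneg x := Iff.rfl

theorem exists_le_nonnegCone_not_nonneg {T : RingPreordering F} {d : F} (hd : d ∉ T) :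
    ∃ P : FieldOrdering F, T ≤ P.nonnegCone ∧ ¬ P.nonneg d := by
  obtain ⟨Q, hTQ, hdQ⟩ :=
    exists_ge_mem_ringPreordering_of_neg_notMem T (x := -d) (by rwa [neg_neg])
  obtain ⟨O, hQO, hO⟩ := exists_ge_isMax_ringPreordering Q
  refine ⟨⟨(· ∈ O), add_mem, mul_mem, mem_or_neg_mem_of_isMax_ringPreordering hO,
    RingPreordering.eq_zero_of_mem_of_neg_mem⟩, hTQ.trans hQO, fun hdO => hd ?_⟩
  rw [RingPreordering.eq_zero_of_mem_of_neg_mem hdO (hQO hdQ)]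
  exact zero_mem T

end FieldOrdering

theorem mem_of_neg_one_mem_of_isSquare_mem (hF : (2 : F) ≠ 0) {T : Subsemiring F}
    (hsq : ∀ x, IsSquare x → x ∈ T) (hneg : -1 ∈ T) (d : F) : d ∈ T := by
  have hd : d = (d + 1) / 2 * ((d + 1) / 2) + -1 * ((d - 1) / 2 * ((d - 1) / 2)) := by
    field_simp
    ring
  rw [hd]
  exact add_mem (hsq _ ⟨_, rfl⟩) (mul_mem hneg (hsq _ ⟨_, rfl⟩))

theorem mem_of_forall_fieldOrdering_nonneg (hF : (2 : F) ≠ 0) {T : Subsemiring F}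
    (hsq : ∀ x, IsSquare x → x ∈ T) {d : F}
    (hd : ∀ P : FieldOrdering F, (∀ x ∈ T, P.nonneg x) → P.nonneg d) : d ∈ T := by
  by_cases hneg : -1 ∈ T
  · exact mem_of_neg_one_mem_of_isSquare_mem hF hsq hneg d
  · by_contra hdT
    obtain ⟨P, hTP, hPd⟩ := FieldOrdering.exists_le_nonnegCone_not_nonneg
      (T := ⟨T, hsq _, hneg⟩) hdT
    exact hPd (hd P hTP)

end Artin

section Symmetric

variable {R F m : Type*} [CommRing R] [Field F] [Fintype m]

theorem exists_dotProduct_mulVec_self_ne_zero_of_isSymm [Invertible (2 : R)] {S : Matrix m m R}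
    (hS : S.IsSymm) (hS0 : S ≠ 0) : ∃ x : m → R, x ⬝ᵥ S *ᵥ x ≠ 0 := by
  classical
  obtain ⟨x, hx⟩ := LinearMap.BilinForm.exists_bilinForm_self_ne_zero
    (B := Matrix.toBilin' S) (by simpa using hS0)
    (LinearMap.BilinForm.isSymm_iff.mp (Matrix.isSymm_toBilin'_iff_isSymm.mpr hS))
  exact ⟨x, by rwa [Matrix.toBilin'_apply'] at hx⟩

theorem exists_eq_sum_smul_vecMulVec_of_isSymm [Invertible (2 : F)] {S : Matrix m m F}
    (hS : S.IsSymm) :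
    ∃ (k : ℕ) (v z : Fin k → m → F), S = ∑ i, (v i ⬝ᵥ S *ᵥ v i) • vecMulVec (z i) (z i) := by
  classical
  let B : LinearMap.BilinForm F (m → F) := Matrix.toBilin' S
  have hB : LinearMap.IsSymm B :=
    LinearMap.BilinForm.isSymm_iff.mp (Matrix.isSymm_toBilin'_iff_isSymm.mpr hS)
  obtain ⟨v, hv⟩ := LinearMap.BilinForm.exists_orthogonal_basis hB
  have hdiag : LinearMap.BilinForm.toMatrix v B = diagonal fun i => v i ⬝ᵥ S *ᵥ v i := by
    ext i j
    rcases eq_or_ne i j with rfl | hij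
    · simp [B, Matrix.toBilin'_apply']
    · simpa [hij] using hv hij
  let Z := v.toMatrix (Pi.basisFun F m)
  refine ⟨_, v, Z, ?_⟩
  calc S = LinearMap.BilinForm.toMatrix (Pi.basisFun F m) B := by
        rw [LinearMap.BilinForm.toMatrix_basisFun, LinearMap.BilinForm.toMatrix'_toBilin']
    _ = Zᵀ * LinearMap.BilinForm.toMatrix v B * Z :=
        (LinearMap.BilinForm.toMatrix_mul_basis_toMatrix v (Pi.basisFun F m) B).symm
    _ = ∑ i, (v i ⬝ᵥ S *ᵥ v i) • vecMulVec (Z i) (Z i) := by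
        ext j k
        rw [hdiag, Matrix.mul_apply, Matrix.sum_apply]
        refine Finset.sum_congr rfl fun i _ => ?_
        rw [mul_diagonal, transpose_apply, Matrix.smul_apply, vecMulVec_apply, smul_eq_mul]
        ring

end Symmetric

section CongruenceCone

variable {R F m : Type*} [CommSemiring R] [Field F] [Fintype m]

/-- The convex cone over a semiring `T` of scalars generated by the matrices `XᵀAX`. -/
def congruenceCone (T : Subsemiring R) (A : Matrix m m R) : Submodule T (Matrix m m R) :=
  Submodule.span T (Set.range fun X => Xᵀ * A * X)

theorem dotProduct_smul_vecMulVec_self_mem_congruenceCone (T : Subsemiring R) (A : Matrix m m R)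
    (x z : m → R) : (x ⬝ᵥ A *ᵥ x) • vecMulVec z z ∈ congruenceCone T A := by
  refine Submodule.subset_span ⟨vecMulVec x z, ?_⟩
  beta_reduce
  rw [transpose_vecMulVec, vecMulVec_mul, vecMulVec_mul_vecMulVec, dotProduct_mulVec,
    vecMulVec_smul]

theorem mem_congruenceCone_of_forall_dotProduct_mem (hF : (2 : F) ≠ 0) {T : Subsemiring F}
    (hsq : ∀ x, IsSquare x → x ∈ T) {A S : Matrix m m F} (hA : A.IsSymm) (hS : S.IsSymm)
    (hA0 : A ≠ 0) (hAT : ∀ x, x ⬝ᵥ A *ᵥ x ∈ T) (hST : ∀ x, x ⬝ᵥ S *ᵥ x ∈ T) :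
    S ∈ congruenceCone T A := by
  have := invertibleOfNonzero hF
  obtain ⟨x, hx⟩ := exists_dotProduct_mulVec_self_ne_zero_of_isSymm hA hA0
  set c := x ⬝ᵥ A *ᵥ x with hc
  have hc_inv : c⁻¹ ∈ T := by
    have h : c⁻¹ = c * (c⁻¹ * c⁻¹) := by field_simp
    rw [h]
    exact mul_mem (hAT x) (hsq _ ⟨_, rfl⟩)
  obtain ⟨k, v, z, hSvz⟩ := exists_eq_sum_smul_vecMulVec_of_isSymm hS
  rw [hSvz]
  refine sum_mem fun i _ => ?_
  have hz := Submodule.smul_mem _ (⟨_, mul_mem (hST (v i)) hc_inv⟩ : T)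
    (dotProduct_smul_vecMulVec_self_mem_congruenceCone T A x (z i))
  rwa [Subsemiring.smul_def, ← hc, smul_smul, inv_mul_cancel_right₀ hx] at hz

end CongruenceCone

section WeightedCone

variable {R ι m : Type*} [CommSemiring R] [Fintype ι] [Fintype m]

/-- The weight `b^e = ∏ⱼ bⱼ^{eⱼ}`, the exponent `e ∈ {0,1}^ι` being encoded by booleans. -/
def weight (b : ι → R) (e : ι → Bool) : R :=
  ∏ j, if e j then b j else 1

theorem weight_mul_weight (b : ι → R) (e f : ι → Bool) :
    weight b e * weight b f =
      weight b (fun j => e j ^^ f j) *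
        (weight b (fun j => e j && f j) * weight b (fun j => e j && f j)) := by
  simp only [weight, ← Finset.prod_mul_distrib]
  refine Finset.prod_congr rfl fun j _ => ?_
  by_cases he : e j <;> by_cases hf : f j <;> simp [he, hf]

/-- The semiring generated by the `bⱼ` and the squares. It is not required to omit `-1`, so that
it makes sense also when no ordering makes all the `bⱼ` positive. -/
def quadraticSubsemiring (b : ι → R) : Subsemiring R :=
  Subsemiring.closure (Set.range b ∪ {x | IsSquare x})

theorem exists_eq_weight_mul_of_mem_closure (b : ι → R) {x : R}
    (hx : x ∈ Submonoid.closure (Set.range b ∪ {x | IsSquare x})) :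
    ∃ e c, x = weight b e * (c * c) := by
  classical
  induction hx using Submonoid.closure_induction with
  | mem x hx =>
    rcases hx with ⟨j, rfl⟩ | ⟨c, rfl⟩
    · exact ⟨fun k => decide (k = j), 1, by simp [weight]⟩
    · exact ⟨fun _ => false, c, by simp [weight]⟩
  | one => exact ⟨fun _ => false, 1, by simp [weight]⟩
  | mul x y _ _ hx hy =>
    obtain ⟨e, c, rfl⟩ := hx
    obtain ⟨f, d, rfl⟩ := hy
    refine ⟨fun j => e j ^^ f j, weight b (fun j => e j && f j) * (c * d), ?_⟩
    rw [mul_mul_mul_comm, weight_mul_weight]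
    ring

variable [DecidableEq ι]

/-- The cone of the sums `∑ₑ b^e ∑ᵢ Xₑᵢᵀ A Xₑᵢ`; padding with zero matrices allows the same number
`N` of terms for every weight. -/
def weightedCone (b : ι → R) (A : Matrix m m R) : AddSubmonoid (Matrix m m R) where
  carrier := {M | ∃ (N : ℕ) (X : (ι → Bool) → Fin N → Matrix m m R),
    M = ∑ e, weight b e • ∑ i, (X e i)ᵀ * A * X e i}
  zero_mem' := ⟨0, fun _ _ => 0, by simp⟩
  add_mem' := by
    rintro _ _ ⟨N, X, rfl⟩ ⟨N', X', rfl⟩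
    refine ⟨N + N', fun e => Fin.append (X e) (X' e), ?_⟩
    simp [Fin.sum_univ_add, Finset.sum_add_distrib]

theorem weight_smul_mem_weightedCone (b : ι → R) (A X : Matrix m m R) (e : ι → Bool) :
    weight b e • (Xᵀ * A * X) ∈ weightedCone b A := by
  refine ⟨1, Function.update 0 e fun _ => X, ?_⟩
  rw [Fintype.sum_eq_single e fun f hf => by simp [hf]]
  simp

theorem smul_mem_weightedCone (b : ι → R) (A X : Matrix m m R) {s : R}
    (hs : s ∈ quadraticSubsemiring b) : s • (Xᵀ * A * X) ∈ weightedCone b A := by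
  rw [quadraticSubsemiring, Subsemiring.mem_closure_iff] at hs
  induction hs using AddSubmonoid.closure_induction with
  | mem s hs =>
    obtain ⟨e, c, rfl⟩ := exists_eq_weight_mul_of_mem_closure b hs
    have hc := weight_smul_mem_weightedCone b A (c • X) e
    rwa [transpose_smul, Matrix.smul_mul, Matrix.smul_mul, Matrix.mul_smul, smul_smul c c,
      smul_smul] at hc
  | zero => simp
  | add s t _ _ hs ht =>
    rw [add_smul]
    exact add_mem hs ht

theorem mem_weightedCone_of_mem_congruenceCone {b : ι → R} {A M : Matrix m m R}
    (hM : M ∈ congruenceCone (quadraticSubsemiring b) A) : M ∈ weightedCone b A := by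
  induction hM using Submodule.closure_induction with
  | zero => exact zero_mem _
  | add M N _ _ hM hN => exact add_mem hM hN
  | smul_mem s M hM =>
    obtain ⟨X, rfl⟩ := hM
    exact smul_mem_weightedCone b A X s.2

end WeightedCone

section Positivity

variable {F ι κ : Type*} [Field F] {P : FieldOrdering F} {n : ℕ}
  {M : Matrix (Fin n) (Fin n) F}

theorem isPSDAt_of_isPDAt (hM : M.IsPDAt P) : M.IsPSDAt P := by
  intro x
  rcases eq_or_ne x 0 with rfl | hx
  · simpa using FieldOrdering.mem_nonnegCone.mp (zero_mem P.nonnegCone)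
  · exact (hM x hx).1

theorem isPSDAt_sum {s : Finset κ} {M : κ → Matrix (Fin n) (Fin n) F}
    (hM : ∀ k ∈ s, (M k).IsPSDAt P) : (∑ k ∈ s, M k).IsPSDAt P := by
  intro x
  rw [sum_mulVec, dotProduct_sum]
  exact sum_mem (S := P.nonnegCone) fun k hk => hM k hk x

theorem isPSDAt_smul {c : F} (hc : P.nonneg c) (hM : M.IsPSDAt P) : (c • M).IsPSDAt P := by
  intro x
  rw [smul_mulVec, dotProduct_smul]
  exact P.mul_nonneg hc (hM x)

theorem isPSDAt_transpose_mul_mul {k : ℕ} (hM : M.IsPSDAt P) (X : Matrix (Fin n) (Fin k) F) :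
    (Xᵀ * M * X).IsPSDAt P := by
  intro x
  rw [← mulVec_mulVec, ← mulVec_mulVec, dotProduct_mulVec, vecMul_transpose]
  exact hM _

theorem mem_quadraticSubsemiring_of_forall_nonneg (hF : (2 : F) ≠ 0) {b : ι → F}
    (hb : ∀ j, b j ≠ 0) {d : F}
    (hd : ∀ P : FieldOrdering F, (∀ j, P.pos (b j)) → P.nonneg d) :
    d ∈ quadraticSubsemiring b :=
  mem_of_forall_fieldOrdering_nonneg hF (fun _ hx => Subsemiring.subset_closure (.inr hx))
    fun P hP => hd P fun j => ⟨hP _ (Subsemiring.subset_closure (.inl ⟨j, rfl⟩)), hb j⟩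

variable [Fintype ι]

theorem nonneg_weight {b : ι → F} (hb : ∀ j, P.nonneg (b j)) (e : ι → Bool) :
    P.nonneg (weight b e) := by
  refine prod_mem (S := P.nonnegCone) fun j _ => ?_
  split_ifs
  exacts [hb j, one_mem P.nonnegCone]

variable [DecidableEq ι]

theorem isPSDAt_of_mem_weightedCone {b : ι → F} (hb : ∀ j, P.nonneg (b j))
    {A : Matrix (Fin n) (Fin n) F} (hA : A.IsPSDAt P) (hM : M ∈ weightedCone b A) :
    M.IsPSDAt P := by
  obtain ⟨N, X, rfl⟩ := hM
  exact isPSDAt_sum fun e _ => isPSDAt_smul (nonneg_weight hb e) <|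
    isPSDAt_sum fun i _ => isPSDAt_transpose_mul_mul hA (X e i)

theorem mem_weightedCone_of_forall_isPSDAt (hF : (2 : F) ≠ 0) {b : ι → F} (hb : ∀ j, b j ≠ 0)
    {A S : Matrix (Fin n) (Fin n) F} (hA : A.IsSymm) (hS : S.IsSymm) (hA0 : A ≠ 0)
    (hAY : ∀ P : FieldOrdering F, (∀ j, P.pos (b j)) → A.IsPSDAt P)
    (hSY : ∀ P : FieldOrdering F, (∀ j, P.pos (b j)) → S.IsPSDAt P) : S ∈ weightedCone b A :=
  mem_weightedCone_of_mem_congruenceCone <|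
    mem_congruenceCone_of_forall_dotProduct_mem hF
      (fun _ hx => Subsemiring.subset_closure (.inr hx)) hA hS hA0
      (fun x => mem_quadraticSubsemiring_of_forall_nonneg hF hb fun P hP => hAY P hP x)
      fun x => mem_quadraticSubsemiring_of_forall_nonneg hF hb fun P hP => hSY P hP x

end Positivity

section Adjoint

variable {R ι m : Type*} [CommRing R] [Fintype ι] [DecidableEq ι] [Fintype m]
  [DecidableEq m] {Φ : Matrix m m R}

theorem isSymm_inv_mul_of_adjoint_eq (hΦsym : Φᵀ = Φ) (hΦ : IsUnit Φ.det) {w : Matrix m m R}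
    (hw : Φ * wᵀ * Φ⁻¹ = w) : (Φ⁻¹ * w).IsSymm :=
  calc (Φ⁻¹ * w)ᵀ = wᵀ * Φ⁻¹ := by rw [transpose_mul, transpose_nonsing_inv, hΦsym]
    _ = Φ⁻¹ * (Φ * wᵀ * Φ⁻¹) := by rw [mul_assoc Φ, nonsing_inv_mul_cancel_left Φ _ hΦ]
    _ = Φ⁻¹ * w := by rw [hw]

theorem inv_mul_mem_weightedCone_iff (hΦ : IsUnit Φ.det) (b : ι → R) (a u : Matrix m m R) :
    Φ⁻¹ * u ∈ weightedCone b (Φ⁻¹ * a) ↔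
      ∃ (N : ℕ) (X : (ι → Bool) → Fin N → Matrix m m R),
        u = ∑ e, weight b e • ∑ i, (Φ * (X e i)ᵀ * Φ⁻¹) * a * X e i := by
  refine exists₂_congr fun N X => ?_
  have hsum : ∑ e, weight b e • ∑ i, (Φ * (X e i)ᵀ * Φ⁻¹) * a * X e i =
      Φ * ∑ e, weight b e • ∑ i, (X e i)ᵀ * (Φ⁻¹ * a) * X e i := by
    simp only [Finset.mul_sum, Matrix.mul_smul, mul_assoc]
  rw [hsum]
  constructor <;> intro h
  · rw [← h, mul_nonsing_inv_cancel_left Φ _ hΦ]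
  · rw [h, nonsing_inv_mul_cancel_left Φ _ hΦ]

end Adjoint

theorem stmt_3_general {F ι : Type*} [Field F] (hF : (2 : F) ≠ 0) [Fintype ι] [DecidableEq ι]
    {n : ℕ} (Φ : Matrix (Fin n) (Fin n) F) (hΦsym : Φᵀ = Φ) (hΦ : IsUnit Φ.det)
    (b : ι → F) (hb : ∀ j, b j ≠ 0)
    (a : Matrix (Fin n) (Fin n) F) (haσ : Φ * aᵀ * Φ⁻¹ = a)
    (haY : ∀ P : FieldOrdering F, (∀ j, P.pos (b j)) → (Φ⁻¹ * a).IsPSDAt P)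
    (u : Matrix (Fin n) (Fin n) F) (huσ : Φ * uᵀ * Φ⁻¹ = u) (hua : u ≠ 0 → a ≠ 0) :
    (∀ P : FieldOrdering F, (∀ j, P.pos (b j)) → (Φ⁻¹ * u).IsPSDAt P) ↔
      ∃ (N : ℕ) (X : (ι → Bool) → Fin N → Matrix (Fin n) (Fin n) F),
        u = ∑ e : ι → Bool,
          (∏ j, if e j then b j else 1) •
            ∑ i, (Φ * (X e i)ᵀ * Φ⁻¹) * a * X e i := by
  refine Iff.trans ⟨fun hu => ?_, fun hu P hP => ?_⟩ (inv_mul_mem_weightedCone_iff hΦ b a u)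
  · rcases eq_or_ne u 0 with rfl | hu0
    · simp
    have ha0 : Φ⁻¹ * a ≠ 0 := fun h =>
      hua hu0 (by rw [← mul_nonsing_inv_cancel_left Φ a hΦ, h, mul_zero])
    exact mem_weightedCone_of_forall_isPSDAt hF hb (isSymm_inv_mul_of_adjoint_eq hΦsym hΦ haσ)
      (isSymm_inv_mul_of_adjoint_eq hΦsym hΦ huσ) ha0 haY hu
  · exact isPSDAt_of_mem_weightedCone (fun j => (hP j).1) (haY P hP) hu

/-- General (possibly singular) case of the main theorem, split orthogonal case: for
`σ = ad_Φ` and an invertible σ-symmetric `a` with `Φ⁻¹a` positive definite on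
`Y = H(b₁,…,b_t)`, a σ-symmetric `u` has `Φ⁻¹u` positive semidefinite at all `P ∈ Y`
iff `u` is a weighted sum of elements `σ(X) a X` with weights `b₁^{e₁} ⋯ b_t^{e_t}`. -/
theorem stmt_3 {F : Type*} [Field F] (hF : (2 : F) ≠ 0) {n : ℕ}
    (Φ : Matrix (Fin n) (Fin n) F) (hΦsym : Φᵀ = Φ) (hΦ : IsUnit Φ.det)
    {t : ℕ} (b : Fin t → F) (hb : ∀ j, b j ≠ 0)
    (a : Matrix (Fin n) (Fin n) F) (ha : IsUnit a) (haσ : Φ * aᵀ * Φ⁻¹ = a)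
    (hamax : ∀ P : FieldOrdering F, (∀ j, P.pos (b j)) → (Φ⁻¹ * a).IsPDAt P)
    (u : Matrix (Fin n) (Fin n) F) (huσ : Φ * uᵀ * Φ⁻¹ = u) :
    (∀ P : FieldOrdering F, (∀ j, P.pos (b j)) → (Φ⁻¹ * u).IsPSDAt P) ↔
      ∃ (N : ℕ) (X : (Fin t → Bool) → Fin N → Matrix (Fin n) (Fin n) F),
        u = ∑ e : Fin t → Bool,
          (∏ j, if e j then b j else 1) •
            ∑ i, (Φ * (X e i)ᵀ * Φ⁻¹) * a * X e i :=
  stmt_3_general hF Φ hΦsym hΦ b hb a haσ (fun P hP => isPSDAt_of_isPDAt (hamax P hP)) u huσ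
    fun hu => have := nontrivial_of_ne u 0 hu; ha.ne_zero
end

section
/- Let D be a division ring of characteristic different from 2, let ϑ be an involution on D, let ε ∈ {−1, 1}, and let h be an ε-hermitian form (with respect to ϑ) on a right D-vector space M. If h(x, x) = 0 for all x ∈ M, then either h is identically zero, or ϑ is the identity map on D and ε = −1 (in which case D is commutative). -/
open Matrix BigOperators

/-!
If `h` is alternating, polarization gives `h x y + ε * ϑ (h x y) = 0`. If moreover `h x y ≠ 0` for
some `x` and `y`, then scaling `y` makes `h x y` an arbitrary scalar, so `ε * ϑ d = -d` for every
`d`. Multiplying `ε * ϑ 1 = -1` by the idempotent `ϑ 1` gives `ϑ 1 = 1`, so `ε = -1` and `ϑ d = d`.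
-/

theorem add_swap_eq_zero_of_alternating {M A : Type*} [Add M] [AddZeroClass A] {h : M → M → A}
    (haddl : ∀ x x' y : M, h (x + x') y = h x y + h x' y)
    (haddr : ∀ x y y' : M, h x (y + y') = h x y + h x y')
    (halt : ∀ x : M, h x x = 0) (x y : M) :
    h x y + h y x = 0 := by
  simpa only [haddl, haddr, halt, zero_add, add_zero] using halt (x + y)

theorem surjective_of_map_op_smul {G M : Type*} [GroupWithZero G] [SMul Gᵐᵒᵖ M] {f : M → G}
    (hf : ∀ (d : G) (y : M), f (MulOpposite.op d • y) = f y * d) {y : M} (hy : f y ≠ 0) :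
    Function.Surjective f := fun d =>
  ⟨MulOpposite.op ((f y)⁻¹ * d) • y, by rw [hf, mul_inv_cancel_left₀ hy]⟩

theorem mul_map_eq_neg_of_alternating {D M : Type*} [DivisionRing D] [Add M] [SMul Dᵐᵒᵖ M]
    {ϑ : D → D} {ε : D} {h : M → M → D}
    (haddl : ∀ x x' y : M, h (x + x') y = h x y + h x' y)
    (haddr : ∀ x y y' : M, h x (y + y') = h x y + h x y')
    (hsmr : ∀ (d : D) (x y : M), h x (MulOpposite.op d • y) = h x y * d)
    (hherm : ∀ x y : M, h y x = ε * ϑ (h x y))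
    (halt : ∀ x : M, h x x = 0) {x y : M} (hxy : h x y ≠ 0) (d : D) :
    ε * ϑ d = -d := by
  obtain ⟨z, rfl⟩ := surjective_of_map_op_smul (fun d => hsmr d x) hxy d
  rw [← hherm]
  exact eq_neg_of_add_eq_zero_right (add_swap_eq_zero_of_alternating haddl haddr halt x z)

theorem map_one_of_mul_map_eq_neg {R : Type*} [Monoid R] [HasDistribNeg R] {ϑ : R → R} {ε : R}
    (hϑmul : ∀ x y : R, ϑ (x * y) = ϑ y * ϑ x) (hneg : ∀ d : R, ε * ϑ d = -d) :
    ϑ 1 = 1 := by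
  have hidem : ϑ 1 * ϑ 1 = ϑ 1 := by rw [← hϑmul, one_mul]
  refine neg_injective ?_
  calc
    -ϑ 1 = ε * ϑ 1 * ϑ 1 := by rw [hneg, neg_one_mul]
    _ = ε * ϑ 1 := by rw [mul_assoc, hidem]
    _ = -1 := hneg 1

theorem eq_self_and_eq_neg_one_of_mul_map_eq_neg {R : Type*} [Monoid R] [HasDistribNeg R]
    {ϑ : R → R} {ε : R}
    (hϑmul : ∀ x y : R, ϑ (x * y) = ϑ y * ϑ x) (hneg : ∀ d : R, ε * ϑ d = -d) :
    (∀ d : R, ϑ d = d) ∧ ε = -1 := by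
  have hε : ε = -1 := by
    simpa only [map_one_of_mul_map_eq_neg hϑmul hneg, mul_one] using hneg 1
  refine ⟨fun d => neg_injective ?_, hε⟩
  rw [← hneg d, hε, neg_one_mul]

theorem stmt_4_general {D M : Type*} [DivisionRing D] [Add M] [SMul Dᵐᵒᵖ M]
    (ϑ : D → D) (hϑmul : ∀ x y : D, ϑ (x * y) = ϑ y * ϑ x)
    (ε : D) (h : M → M → D)
    (haddl : ∀ x x' y : M, h (x + x') y = h x y + h x' y)
    (haddr : ∀ x y y' : M, h x (y + y') = h x y + h x y')
    (hsmr : ∀ (d : D) (x y : M), h x (MulOpposite.op d • y) = h x y * d)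
    (hherm : ∀ x y : M, h y x = ε * ϑ (h x y))
    (halt : ∀ x : M, h x x = 0) :
    (∀ x y : M, h x y = 0) ∨
      (∀ a b : D, a * b = b * a) ∧ (∀ d : D, ϑ d = d) ∧ ε = -1 := by
  refine or_iff_not_imp_left.mpr fun hne => ?_
  push Not at hne
  obtain ⟨x, y, hxy⟩ := hne
  have hneg : ∀ d : D, ε * ϑ d = -d :=
    mul_map_eq_neg_of_alternating haddl haddr hsmr hherm halt hxy
  obtain ⟨hid, hε⟩ := eq_self_and_eq_neg_one_of_mul_map_eq_neg hϑmul hneg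
  have hcomm : ∀ a b : D, a * b = b * a := fun a b => by
    simpa only [hid] using hϑmul a b
  exact ⟨hcomm, hid, hε⟩

/-- If an ε-hermitian form over a division ring with involution (of characteristic ≠ 2)
satisfies `h(x,x) = 0` for all `x`, then `h = 0`, or the involution is the identity
and `ε = -1`. -/
theorem stmt_4 {D : Type*} [DivisionRing D] (hD : (2 : D) ≠ 0)
    (ϑ : D → D)
    (hϑadd : ∀ x y : D, ϑ (x + y) = ϑ x + ϑ y)
    (hϑmul : ∀ x y : D, ϑ (x * y) = ϑ y * ϑ x)
    (hϑinv : ∀ x : D, ϑ (ϑ x) = x)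
    (ε : D) (hε : ε = 1 ∨ ε = -1)
    {M : Type*} [AddCommGroup M] [Module Dᵐᵒᵖ M]
    (h : M → M → D)
    (haddl : ∀ x x' y : M, h (x + x') y = h x y + h x' y)
    (haddr : ∀ x y y' : M, h x (y + y') = h x y + h x y')
    (hsml : ∀ (d : D) (x y : M), h (MulOpposite.op d • x) y = ϑ d * h x y)
    (hsmr : ∀ (d : D) (x y : M), h x (MulOpposite.op d • y) = h x y * d)
    (hherm : ∀ x y : M, h y x = ε * ϑ (h x y))
    (hiso : ∀ x : M, h x x = 0) :
    (∀ x y : M, h x y = 0) ∨ ((∀ d : D, ϑ d = d) ∧ ε = -1) :=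
  (stmt_4_general ϑ hϑmul ε h haddl haddr hsmr hherm hiso).imp_right And.right
end

section
/- Let D be a division ring of characteristic different from 2, let ϑ be an involution on D, and let ε ∈ {−1, 1}; assume it is not the case that both ϑ is the identity on D and ε = −1. Let H ∈ M_ℓ(D) be a matrix satisfying ϑ(H)ᵀ = εH, where ϑ is applied entrywise. Then there exist an invertible matrix G ∈ M_ℓ(D), an integer k with 0 ≤ k ≤ ℓ, and nonzero elements u_1, ..., u_k ∈ D with ϑ(u_i) = ε u_i, such that ϑ(G)ᵀ H G = diag(u_1, ..., u_k, 0, ..., 0). -/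
open Matrix BigOperators

/-!
View `H` as the Gram matrix of an `ε`-hermitian form, so that `H ↦ Gᴴ * H * G` is a change of basis.
If the form is nonzero, some vector is anisotropic: when all diagonal entries vanish and
`H i j ≠ 0`, replacing `e j` by `e j + e i * c` creates the diagonal entry `H j i * c + d` with
`d = star c * H i j`. Here `d` can be prescribed, and `ε` times this entry is `star d + ε * d`,
which vanishes identically in `d` only for `star = id` and `ε = -1`.
Projecting the other basis vectors orthogonally to an anisotropic one splits it off.
-/

section Congruence

variable {n R : Type*} [Fintype n] [DecidableEq n]

/-- The relation `Pᴴ * A * P = B` for some invertible `P`: the matrices `A` and `B` represent the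
same sesquilinear form in two bases. -/
def StarCongruent [Semiring R] [StarRing R] (A B : Matrix n n R) : Prop :=
  ∃ P : Matrix n n R, IsUnit P ∧ Pᴴ * A * P = B

namespace StarCongruent

variable [Semiring R] [StarRing R] {A B C : Matrix n n R}

theorem refl (A : Matrix n n R) : StarCongruent A A :=
  ⟨1, isUnit_one, by rw [conjTranspose_one, Matrix.one_mul, Matrix.mul_one]⟩

theorem trans (hAB : StarCongruent A B) (hBC : StarCongruent B C) : StarCongruent A C := by
  obtain ⟨P, hP, rfl⟩ := hAB
  obtain ⟨Q, hQ, rfl⟩ := hBC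
  exact ⟨P * Q, hP.mul hQ, by simp only [conjTranspose_mul, Matrix.mul_assoc]⟩

theorem submatrix_perm (A : Matrix n n R) (σ : Equiv.Perm n) :
    StarCongruent A (A.submatrix σ σ) := by
  have hmul : (1 : Matrix n n R).submatrix id σ * (1 : Matrix n n R).submatrix σ id = 1 := by
    rw [submatrix_mul_equiv, Matrix.one_mul, submatrix_id_id]
  have hmul' : (1 : Matrix n n R).submatrix σ id * (1 : Matrix n n R).submatrix id σ = 1 := by
    rw [← submatrix_mul _ _ _ _ _ Function.bijective_id, Matrix.one_mul, submatrix_one_equiv]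
  refine ⟨(1 : Matrix n n R).submatrix id σ, ⟨⟨_, _, hmul, hmul'⟩, rfl⟩, ?_⟩
  calc ((1 : Matrix n n R).submatrix id σ)ᴴ * A * (1 : Matrix n n R).submatrix id σ
      = (1 : Matrix n n R).submatrix σ id * A * (1 : Matrix n n R).submatrix id σ := by
        rw [conjTranspose_submatrix, conjTranspose_one]
    _ = A.submatrix σ id * (1 : Matrix n n R).submatrix id σ :=
        congrArg (· * _) (one_submatrix_mul σ (Equiv.refl n) A)
    _ = A.submatrix σ σ := mul_submatrix_one (Equiv.refl n) σ (A.submatrix σ id)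

end StarCongruent

/-- The matrix of the change of basis replacing each `e b` by `e b + e i * v b`. -/
def shearMatrix [Semiring R] (i : n) (v : n → R) : Matrix n n R :=
  1 + vecMulVec (Pi.single i 1) v

theorem isUnit_shearMatrix [Ring R] {i : n} {v : n → R} (hv : v i = 0) :
    IsUnit (shearMatrix i v) := by
  refine IsNilpotent.isUnit_one_add ⟨2, ?_⟩
  rw [pow_two, vecMulVec_mul_vecMulVec, dotProduct_single_one, hv, zero_smul, vecMulVec_zero]

theorem conjTranspose_shearMatrix_mul_mul_apply [Semiring R] [StarRing R] (A : Matrix n n R)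
    (i : n) (v : n → R) (a b : n) :
    ((shearMatrix i v)ᴴ * A * shearMatrix i v) a b =
      A a b + A a i * v b + star (v a) * (A i b + A i i * v b) := by
  have hcol : ∀ c, (A * shearMatrix i v) c b = A c b + A c i * v b := fun c => by
    simp [shearMatrix, Matrix.mul_add, mul_vecMulVec, vecMulVec_apply]
  have hstar : (shearMatrix i v)ᴴ = 1 + vecMulVec (star v) (Pi.single i 1) := by
    simp [shearMatrix, conjTranspose_vecMulVec]
  rw [Matrix.mul_assoc, hstar, Matrix.add_mul, Matrix.one_mul, vecMulVec_mul, Matrix.add_apply,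
    hcol, vecMulVec_apply, single_one_vecMul, row_apply, hcol, Pi.star_apply]

end Congruence

section Hermitian

variable {n R : Type*}

/-- `ε`-hermitian matrices, `Aᴴ = ε • A`: hermitian for `ε = 1`, skew-hermitian for `ε = -1`. -/
def IsEpsHermitian [Mul R] [Star R] (ε : R) (A : Matrix n n R) : Prop :=
  Aᴴ = ε • A

namespace IsEpsHermitian

theorem star_apply [Mul R] [Star R] {ε : R} {A : Matrix n n R} (hA : IsEpsHermitian ε A)
    (i j : n) : star (A i j) = ε * A j i :=
  congrFun (congrFun hA j) i

theorem apply_eq_zero [NonUnitalNonAssocSemiring R] [StarRing R] {ε : R} {A : Matrix n n R}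
    (hA : IsEpsHermitian ε A) {i j : n} (hij : A i j = 0) : A j i = 0 := by
  rw [← star_eq_zero, hA.star_apply, hij, mul_zero]

theorem of_starCongruent [Fintype n] [DecidableEq n] [Semiring R] [StarRing R] {ε : R}
    (hε : ε ∈ Set.center R) {A B : Matrix n n R} (hA : IsEpsHermitian ε A)
    (hAB : StarCongruent A B) : IsEpsHermitian ε B := by
  obtain ⟨P, -, rfl⟩ := hAB
  have hcomm : Pᴴ * ε • A = ε • (Pᴴ * A) := by
    ext i j
    simp only [mul_apply, Matrix.smul_apply, smul_eq_mul, ← mul_assoc, (hε.comm _).eq,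
      Finset.sum_mul]
  rw [IsEpsHermitian, conjTranspose_mul, conjTranspose_mul, conjTranspose_conjTranspose, hA,
    ← Matrix.mul_assoc, hcomm, smul_mul]

end IsEpsHermitian

end Hermitian

section IsDiagOn

variable {n R : Type*}

/-- The rows of `A` indexed by `s` vanish off the diagonal: the basis vectors indexed by `s` are
orthogonal to all the other ones. For `ε`-hermitian matrices the same then holds for columns. -/
def IsDiagOn [Zero R] (s : Set n) (A : Matrix n n R) : Prop :=
  ∀ i ∈ s, ∀ j, i ≠ j → A i j = 0

theorem IsDiagOn.conjTranspose_shearMatrix_mul_mul [Fintype n] [DecidableEq n] [Semiring R]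
    [StarRing R] {s : Set n} {A : Matrix n n R} (hA : IsDiagOn s A) {i : n} (hi : i ∉ s)
    {v : n → R} (hv : ∀ a ∈ s, v a = 0) :
    IsDiagOn s ((shearMatrix i v)ᴴ * A * shearMatrix i v) := by
  intro a ha b hab
  have hai : A a i = 0 := hA a ha i (ne_of_mem_of_not_mem ha hi)
  rw [conjTranspose_shearMatrix_mul_mul_apply, hA a ha b hab, hai, hv a ha]
  simp

end IsDiagOn

theorem exists_star_add_mul_ne_zero {R : Type*} [Ring R] [StarRing R] {ε : R}
    (hstar : ¬((∀ d : R, star d = d) ∧ ε = -1)) : ∃ d : R, star d + ε * d ≠ 0 := by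
  by_contra! h
  have hε : ε = -1 := (neg_eq_of_add_eq_zero_right (by simpa using h 1)).symm
  exact hstar ⟨fun d => by simpa [hε, add_neg_eq_zero] using h d, hε⟩

section DivisionRing

variable {n D : Type*} [Fintype n] [DecidableEq n] [DivisionRing D] [StarRing D] {ε : D}
  {A : Matrix n n D} {s : Set n}

theorem IsDiagOn.exists_starCongruent_insert_of_apply_self_ne_zero (hA : IsDiagOn s A) {i : n}
    (hi : A i i ≠ 0) (his : i ∉ s) (hrow : ∀ a ∈ s, A i a = 0) :
    ∃ B, StarCongruent A B ∧ IsDiagOn (insert i s) B := by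
  let v : n → D := Function.update (fun b => -((A i i)⁻¹ * A i b)) i 0
  have hvi : v i = 0 := Function.update_self ..
  have hv : ∀ b, i ≠ b → v b = -((A i i)⁻¹ * A i b) := fun b hb =>
    Function.update_of_ne hb.symm ..
  refine ⟨_, ⟨shearMatrix i v, isUnit_shearMatrix hvi, rfl⟩, ?_⟩
  rintro a (rfl | ha) b hab
  · rw [conjTranspose_shearMatrix_mul_mul_apply, hvi, hv b hab]
    simp [hi]
  · refine hA.conjTranspose_shearMatrix_mul_mul his (fun a ha => ?_) a ha b hab
    rw [hv a (ne_of_mem_of_not_mem ha his).symm, hrow a ha, mul_zero, neg_zero]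

theorem IsDiagOn.exists_starCongruent_apply_self_ne_zero
    (hstar : ¬((∀ d : D, star d = d) ∧ ε = -1))
    (hH : IsEpsHermitian ε A) (hA : IsDiagOn s A) {i j : n} (hi : i ∉ s) (hj : j ∉ s)
    (hij : A i j ≠ 0) :
    ∃ B, StarCongruent A B ∧ IsDiagOn s B ∧ ∃ k ∉ s, B k k ≠ 0 := by
  by_cases hdiag : ∃ k ∉ s, A k k ≠ 0
  · exact ⟨A, .refl A, hA, hdiag⟩
  push Not at hdiag
  obtain ⟨d, hd⟩ := exists_star_add_mul_ne_zero hstar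
  have hne : i ≠ j := by
    rintro rfl
    exact hij (hdiag i hi)
  let c : D := star (d * (A i j)⁻¹)
  have hd' : star c * A i j = d := by rw [star_star, inv_mul_cancel_right₀ hij]
  let v : n → D := Pi.single j c
  have hvj : v j = c := Pi.single_eq_same ..
  have hv : ∀ a, a ≠ j → v a = 0 := fun a ha => Pi.single_eq_of_ne ha _
  refine ⟨_, ⟨shearMatrix i v, isUnit_shearMatrix (hv i hne), rfl⟩,
    hA.conjTranspose_shearMatrix_mul_mul hi fun a ha => hv a (ne_of_mem_of_not_mem ha hj),
    j, hj, ?_⟩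
  have hentry : ((shearMatrix i v)ᴴ * A * shearMatrix i v) j j = A j i * c + d := by
    rw [conjTranspose_shearMatrix_mul_mul_apply, hvj, hdiag i hi, hdiag j hj, zero_mul, zero_add,
      add_zero, hd']
  have hscale : ε * (A j i * c + d) = star d + ε * d := by
    rw [mul_add, ← mul_assoc, ← hH.star_apply, ← hd', star_mul, star_star]
  rw [hentry]
  exact right_ne_zero_of_mul (hscale ▸ hd)

theorem IsDiagOn.exists_starCongruent_insert (hε : ε ∈ Set.center D)
    (hstar : ¬((∀ d : D, star d = d) ∧ ε = -1)) (hH : IsEpsHermitian ε A) (hA : IsDiagOn s A)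
    (hdiag : ¬A.IsDiag) : ∃ k ∉ s, ∃ B, StarCongruent A B ∧ IsDiagOn (insert k s) B := by
  obtain ⟨i, j, hne, hij⟩ : ∃ i j, i ≠ j ∧ A i j ≠ 0 := by
    simpa [Matrix.IsDiag, Pairwise] using hdiag
  have hi : i ∉ s := fun his => hij (hA i his j hne)
  have hj : j ∉ s := fun hjs => hij (hH.apply_eq_zero (hA j hjs i hne.symm))
  obtain ⟨B, hAB, hB, k, hk, hBk⟩ := hA.exists_starCongruent_apply_self_ne_zero hstar hH hi hj hij
  have hBH := hH.of_starCongruent hε hAB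
  obtain ⟨C, hBC, hC⟩ := hB.exists_starCongruent_insert_of_apply_self_ne_zero hBk hk fun a ha =>
    hBH.apply_eq_zero (hB a ha k (ne_of_mem_of_not_mem ha hk))
  exact ⟨k, hk, C, hAB.trans hBC, hC⟩

theorem IsEpsHermitian.exists_starCongruent_isDiag (hε : ε ∈ Set.center D)
    (hstar : ¬((∀ d : D, star d = d) ∧ ε = -1)) (hA : IsEpsHermitian ε A) :
    ∃ B, StarCongruent A B ∧ B.IsDiag := by
  obtain ⟨s, ⟨B, hAB, hB⟩, hmax⟩ :=
    (Set.toFinite {s : Set n | ∃ B, StarCongruent A B ∧ IsDiagOn s B}).exists_maximal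
      ⟨∅, A, .refl A, fun _ h => h.elim⟩
  by_contra! hdiag
  obtain ⟨k, hk, C, hBC, hC⟩ :=
    hB.exists_starCongruent_insert hε hstar (hA.of_starCongruent hε hAB) (hdiag B hAB)
  exact hk (hmax ⟨C, hAB.trans hBC, hC⟩ (Set.subset_insert k s) (Set.mem_insert k s))

end DivisionRing

theorem exists_perm_apply_iff_lt {ℓ : ℕ} (p : Fin ℓ → Prop) :
    ∃ k ≤ ℓ, ∃ σ : Equiv.Perm (Fin ℓ), ∀ i, p (σ i) ↔ (i : ℕ) < k := by
  classical
  let k := Fintype.card {i // p i}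
  have hk : k ≤ ℓ := (Fintype.card_subtype_le p).trans_eq (Fintype.card_fin ℓ)
  let e : {i : Fin ℓ // (i : ℕ) < k} ≃ {i // p i} :=
    Fintype.equivOfCardEq (Fintype.card_fin_lt_of_le hk)
  exact ⟨k, hk, e.extendSubtype, fun i =>
    ⟨not_imp_not.mp (e.extendSubtype_not_mem i), e.extendSubtype_mem i⟩⟩

theorem stmt_5_general {D : Type*} [DivisionRing D] [StarRing D] {ε : D} (hε : ε ∈ Set.center D)
    (hstar : ¬((∀ d : D, star d = d) ∧ ε = -1)) {ℓ : ℕ} (H : Matrix (Fin ℓ) (Fin ℓ) D)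
    (hH : Hᴴ = ε • H) :
    ∃ G : Matrix (Fin ℓ) (Fin ℓ) D, IsUnit G ∧
      ∃ k : ℕ, k ≤ ℓ ∧
        ∃ u : Fin ℓ → D,
          (∀ i : Fin ℓ, (i : ℕ) < k → u i ≠ 0 ∧ star (u i) = ε * u i) ∧
          (∀ i : Fin ℓ, k ≤ (i : ℕ) → u i = 0) ∧
          Gᴴ * H * G = diagonal u := by
  obtain ⟨B, hHB, hB⟩ := IsEpsHermitian.exists_starCongruent_isDiag hε hstar hH
  obtain ⟨k, hk, σ, hσ⟩ := exists_perm_apply_iff_lt fun i => B i i ≠ 0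
  have hHσ : StarCongruent H (B.submatrix σ σ) := hHB.trans (.submatrix_perm B σ)
  have hsymm := IsEpsHermitian.of_starCongruent hε hH hHσ
  obtain ⟨G, hG, hGH⟩ := hHσ
  refine ⟨G, hG, k, hk, (B.submatrix σ σ).diag, fun i hi => ⟨(hσ i).mpr hi, hsymm.star_apply i i⟩,
    fun i hi => ?_, ?_⟩
  · exact not_not.mp fun h => hi.not_gt ((hσ i).mp h)
  · rw [hGH, (hB.submatrix σ.injective).diagonal_diag]

/-- Diagonalization of a possibly singular ε-hermitian matrix over a division ring with
involution (characteristic ≠ 2), outside the case (ϑ = id, ε = -1): there is an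
invertible `G` with `ϑ(G)ᵀ H G = diag(u₁, …, u_k, 0, …, 0)` where the `u_i` are nonzero
ε-symmetric elements. -/
theorem stmt_5 {D : Type*} [DivisionRing D] (hD : (2 : D) ≠ 0)
    (ϑ : D → D)
    (hϑadd : ∀ x y : D, ϑ (x + y) = ϑ x + ϑ y)
    (hϑmul : ∀ x y : D, ϑ (x * y) = ϑ y * ϑ x)
    (hϑinv : ∀ x : D, ϑ (ϑ x) = x)
    (ε : D) (hε : ε = 1 ∨ ε = -1)
    (hnot : ¬ ((∀ d : D, ϑ d = d) ∧ ε = -1))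
    {ℓ : ℕ} (H : Matrix (Fin ℓ) (Fin ℓ) D)
    (hH : (H.map ϑ)ᵀ = ε • H) :
    ∃ G : Matrix (Fin ℓ) (Fin ℓ) D, IsUnit G ∧
      ∃ k : ℕ, k ≤ ℓ ∧
        ∃ u : Fin ℓ → D,
          (∀ i : Fin ℓ, (i : ℕ) < k → u i ≠ 0 ∧ ϑ (u i) = ε * u i) ∧
          (∀ i : Fin ℓ, k ≤ (i : ℕ) → u i = 0) ∧
          (G.map ϑ)ᵀ * H * G = Matrix.diagonal u := by
  let _ : StarRing D :=
    { star := ϑ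
      star_involutive := hϑinv
      star_mul := hϑmul
      star_add := hϑadd }
  have hεc : ε ∈ Set.center D := by
    rcases hε with rfl | rfl
    exacts [Set.one_mem_center, Set.neg_mem_center Set.one_mem_center]
  exact stmt_5_general hεc hnot H hH
end

section
/- Let F be a field of characteristic different from 2 with a field ordering P, let Φ ∈ M_n(F) be symmetric, invertible, and positive definite at P, and let σ be the involution on M_n(F) given by σ(X) = ΦXᵀΦ⁻¹. Let U ∈ M_n(F) be invertible with σ(U) = U. Then tr(σ(X)UX) >_P 0 for all nonzero X ∈ M_n(F) if and only if Φ⁻¹U is positive definite at P. -/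
open Matrix BigOperators

/-!
Replace `P` by the linear order it defines and put `V = Φ⁻¹U`, so that
`tr(σ(X)UX) = tr(Φ(XᵀVX))`. A basis orthogonal for `Φ` gives `Φ = SᵀDS` with `S` invertible and
`D` diagonal with positive entries. If `V` is positive definite, then
`tr(Φ(XᵀVX)) = ∑ᵢ dᵢ (yᵢᵀVyᵢ)`, where `yᵢ` are the columns of `XSᵀ`, and this is positive for
`X ≠ 0`. Conversely, the rank one matrix `X = vvᵀ` gives `tr(Φ(XᵀVX)) = (vᵀΦv)(vᵀVv)`, so `vᵀVv` is
positive.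
-/

namespace FieldOrdering

variable {F : Type*} [Field F] (P : FieldOrdering F)

theorem nonneg_mul_self_s7 (x : F) : P.nonneg (x * x) := by
  rcases P.total x with hx | hx
  · exact P.mul_nonneg hx hx
  · simpa using P.mul_nonneg hx hx

/-- The nonnegative elements of a field ordering as a ring cone, which connects `FieldOrdering` to
Mathlib's constructions of orders from cones. -/
def toRingCone : RingCone F where
  carrier := {x | P.nonneg x}
  mul_mem' := P.mul_nonneg
  one_mem' := by simpa using P.nonneg_mul_self_s7 1
  add_mem' := P.add_nonneg
  zero_mem' := by simpa using P.nonneg_mul_self_s7 0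
  eq_zero_of_mem_of_neg_mem' := P.eq_zero_of

instance : HasMemOrNegMem P.toRingCone := ⟨P.total⟩

open Classical in
/-- The linear order `x ≤ y ↔ P.nonneg (y - x)` of a field ordering `P`. It is not an instance,
since a field may have several orderings. -/
noncomputable abbrev toLinearOrder : LinearOrder F := .mkOfAddGroupCone P.toRingCone

theorem isStrictOrderedRing :
    letI := P.toLinearOrder
    IsStrictOrderedRing F :=
  let := P.toLinearOrder
  have : IsOrderedRing F := .mkOfCone P.toRingCone
  IsOrderedRing.toIsStrictOrderedRing F

theorem nonneg_iff {x : F} :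
    letI := P.toLinearOrder
    P.nonneg x ↔ 0 ≤ x := by
  change _ ↔ P.nonneg (x - 0)
  rw [sub_zero]

theorem pos_iff {x : F} :
    letI := P.toLinearOrder
    P.pos x ↔ 0 < x := by
  let := P.toLinearOrder
  rw [pos, P.nonneg_iff, lt_iff_le_and_ne, ne_comm]

end FieldOrdering

section CommRing

variable {m n ι R : Type*} [Fintype n] [CommRing R]

theorem mul_transpose_toMatrix_ne_zero {M : Type*} [AddCommGroup M] [Module R M] [Finite ι]
    (b : Module.Basis ι R M) (c : Module.Basis n R M) {X : Matrix m n R} (hX : X ≠ 0) :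
    X * (b.toMatrix c)ᵀ ≠ 0 := by
  classical
  cases nonempty_fintype ι
  intro hzero
  have hinv : (b.toMatrix c)ᵀ * (c.toMatrix b)ᵀ = 1 := by
    rw [← transpose_mul, Module.Basis.toMatrix_mul_toMatrix_flip, transpose_one]
  apply hX
  rw [← Matrix.mul_one X, ← hinv, ← Matrix.mul_assoc, hzero, Matrix.zero_mul]

variable [Fintype m] [Fintype ι]

theorem trace_transpose_mul_mul_mul_transpose_mul_mul (D : Matrix ι ι R) (S : Matrix ι m R)
    (B : Matrix n n R) (X : Matrix n m R) :
    (Sᵀ * D * S * (Xᵀ * B * X)).trace = (D * ((X * Sᵀ)ᵀ * B * (X * Sᵀ))).trace := by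
  rw [Matrix.mul_assoc Sᵀ, Matrix.mul_assoc Sᵀ, trace_mul_comm]
  simp only [transpose_mul, transpose_transpose, Matrix.mul_assoc]

variable [DecidableEq m] [DecidableEq n] [DecidableEq ι]

theorem toQuadraticForm'_apply (A : Matrix n n R) (x : n → R) :
    A.toQuadraticForm' x = x ⬝ᵥ A *ᵥ x := by
  simp [toQuadraticForm', toLinearMap₂'_apply']

theorem eq_transpose_mul_diagonal_mul_of_isOrthoᵢ {A : Matrix n n R}
    {v : Module.Basis ι R (n → R)} (hv : A.toBilin'.IsOrthoᵢ v) :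
    A = (v.toMatrix (Pi.basisFun R n))ᵀ * diagonal (fun i ↦ A.toQuadraticForm' (v i)) *
      v.toMatrix (Pi.basisFun R n) := by
  have hdiag : LinearMap.BilinForm.toMatrix v A.toBilin' =
      diagonal (fun i ↦ A.toQuadraticForm' (v i)) := by
    ext i j
    rcases eq_or_ne i j with rfl | hij
    · simp [toQuadraticForm'_apply, toBilin'_apply']
    · simpa [hij] using hv hij
  rw [← hdiag, LinearMap.BilinForm.toMatrix_mul_basis_toMatrix,
    LinearMap.BilinForm.toMatrix_basisFun, LinearMap.BilinForm.toMatrix'_toBilin']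

theorem trace_mul_transpose_mul_mul_vecMulVec (A : Matrix m m R) (B : Matrix n n R)
    (v : n → R) (w : m → R) :
    (A * ((vecMulVec v w)ᵀ * B * vecMulVec v w)).trace =
      A.toQuadraticForm' w * B.toQuadraticForm' v := by
  rw [transpose_vecMulVec, vecMulVec_mul, vecMulVec_mul_vecMulVec, ← dotProduct_mulVec,
    mul_vecMulVec, trace_vecMulVec, dotProduct_smul, smul_eq_mul, mul_comm,
    dotProduct_comm (A *ᵥ w), toQuadraticForm'_apply, toQuadraticForm'_apply]

theorem trace_diagonal_mul_transpose_mul_mul (d : m → R) (B : Matrix n n R) (X : Matrix n m R) :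
    (diagonal d * (Xᵀ * B * X)).trace = ∑ i, d i * B.toQuadraticForm' (X.col i) := by
  simp_rw [trace, diag_apply, diagonal_mul, toQuadraticForm'_apply, dotProduct_mulVec]
  rfl

theorem trace_diagonal_mul_transpose_mul_mul_pos [PartialOrder R] [IsStrictOrderedRing R]
    {d : m → R} (hd : ∀ i, 0 < d i) {B : Matrix n n R} (hB : B.toQuadraticForm'.PosDef)
    {X : Matrix n m R} (hX : X ≠ 0) : 0 < (diagonal d * (Xᵀ * B * X)).trace := by
  obtain ⟨i, hi⟩ : ∃ i, X.col i ≠ 0 := by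
    contrapose! hX
    ext j i
    exact congrFun (hX i) j
  rw [trace_diagonal_mul_transpose_mul_mul]
  exact Finset.sum_pos' (fun j _ ↦ mul_nonneg (hd j).le (hB.nonneg _))
    ⟨i, Finset.mem_univ i, mul_pos (hd i) (hB _ hi)⟩

end CommRing

section OrderedField

variable {m n K : Type*} [Fintype m] [DecidableEq m] [Fintype n] [DecidableEq n]
  [Field K] [LinearOrder K] [IsStrictOrderedRing K]

theorem trace_mul_transpose_mul_mul_pos {A : Matrix m m K} (hAsymm : A.IsSymm)
    (hA : A.toQuadraticForm'.PosDef) {B : Matrix n n K} (hB : B.toQuadraticForm'.PosDef)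
    {X : Matrix n m K} (hX : X ≠ 0) : 0 < (A * (Xᵀ * B * X)).trace := by
  have : Invertible (2 : K) := invertibleOfNonzero two_ne_zero
  have hform : LinearMap.IsSymm A.toBilin' :=
    LinearMap.BilinForm.isSymm_iff.mp (isSymm_toBilin'_iff_isSymm.mpr hAsymm)
  obtain ⟨v, hv⟩ := LinearMap.BilinForm.exists_orthogonal_basis hform
  rw [eq_transpose_mul_diagonal_mul_of_isOrthoᵢ hv, trace_transpose_mul_mul_mul_transpose_mul_mul]
  exact trace_diagonal_mul_transpose_mul_mul_pos (fun i ↦ hA _ (v.ne_zero i)) hB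
    (mul_transpose_toMatrix_ne_zero v _ hX)

theorem forall_trace_mul_transpose_mul_mul_pos_iff {A : Matrix n n K} (hAsymm : A.IsSymm)
    (hA : A.toQuadraticForm'.PosDef) {B : Matrix n n K} :
    (∀ X : Matrix n n K, X ≠ 0 → 0 < (A * (Xᵀ * B * X)).trace) ↔ B.toQuadraticForm'.PosDef := by
  refine ⟨fun h v hv ↦ ?_, fun hB X hX ↦ trace_mul_transpose_mul_mul_pos hAsymm hA hB hX⟩
  have htrace := h (vecMulVec v v) (vecMulVec_ne_zero hv hv)
  rw [trace_mul_transpose_mul_mul_vecMulVec] at htrace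
  exact (pos_iff_pos_of_mul_pos htrace).mp (hA v hv)

end OrderedField

theorem isPDAt_iff_posDef {F : Type*} [Field F] (P : FieldOrdering F) {n : ℕ}
    {M : Matrix (Fin n) (Fin n) F} :
    letI := P.toLinearOrder
    M.IsPDAt P ↔ M.toQuadraticForm'.PosDef := by
  simp only [IsPDAt, QuadraticMap.PosDef, toQuadraticForm'_apply, P.pos_iff]

theorem stmt_7_general {F : Type*} [Field F] {n : ℕ} (P : FieldOrdering F)
    (Φ : Matrix (Fin n) (Fin n) F) (hΦsym : Φᵀ = Φ) (hΦpd : Φ.IsPDAt P)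
    (U : Matrix (Fin n) (Fin n) F) :
    (∀ X : Matrix (Fin n) (Fin n) F, X ≠ 0 →
        P.pos ((Φ * Xᵀ * Φ⁻¹) * U * X).trace) ↔
      (Φ⁻¹ * U).IsPDAt P := by
  let := P.toLinearOrder
  have := P.isStrictOrderedRing
  have hregroup (X : Matrix (Fin n) (Fin n) F) :
      (Φ * Xᵀ * Φ⁻¹) * U * X = Φ * (Xᵀ * (Φ⁻¹ * U) * X) := by
    simp only [Matrix.mul_assoc]
  simp only [hregroup, P.pos_iff, isPDAt_iff_posDef] at hΦpd ⊢
  exact forall_trace_mul_transpose_mul_mul_pos_iff hΦsym hΦpd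

/-- For `σ = ad_Φ` with `Φ` positive definite at `P` and `U` invertible σ-symmetric,
the trace form `X ↦ tr(σ(X)UX)` is positive definite at `P` iff `Φ⁻¹U` is positive
definite at `P`. -/
theorem stmt_7 {F : Type*} [Field F] (hF : (2 : F) ≠ 0) {n : ℕ}
    (P : FieldOrdering F)
    (Φ : Matrix (Fin n) (Fin n) F) (hΦsym : Φᵀ = Φ) (hΦ : IsUnit Φ.det)
    (hΦpd : Φ.IsPDAt P)
    (U : Matrix (Fin n) (Fin n) F) (hUunit : IsUnit U) (hUσ : Φ * Uᵀ * Φ⁻¹ = U) :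
    (∀ X : Matrix (Fin n) (Fin n) F, X ≠ 0 →
        P.pos ((Φ * Xᵀ * Φ⁻¹) * U * X).trace) ↔
      (Φ⁻¹ * U).IsPDAt P :=
  stmt_7_general P Φ hΦsym hΦpd U
end
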